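/- Define g : ℤ³ → ℂ by g(a,b,c) = (q − q^{-1})·[a−b]·[a−c]·[b−c]. Then for all x₁, x₂, x₃, x₄, x₅ ∈ ℤ, the fully antisymmetrized sh-Jacobi sum vanishes: Σ_{σ∈S₅} sgn(σ)·g(x_{σ(1)},x_{σ(2)},x_{σ(3)})·g(x_{σ(1)}+x_{σ(2)}+x_{σ(3)}, x_{σ(4)}, x_{σ(5)}) = 0. Consequently the trilinear bracket ⟦L_a,L_b,L_c⟧ = g(a,b,c)·L_{a+b+c} on the free ℂ-module with basis (L_i)_{i∈ℤ} (the q-deformed Virasoro–Witt 3-algebra) satisfies the sh-Jacobi identity, i.e. it is a sh-3-Lie algebra. -/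

import Mathlib

/-- The q-number `[x] = (q^x - q^{-x})/(q - q⁻¹)`. -/
noncomputable def qnum (q : ℂ) (x : ℤ) : ℂ := (q ^ x - q ^ (-x)) / (q - q⁻¹)

/-- The structure constant `g(a,b,c) = (q - q⁻¹)·[a-b]·[a-c]·[b-c]` of the
q-deformed Virasoro–Witt 3-algebra. -/
noncomputable def gVW (q : ℂ) (a b c : ℤ) : ℂ :=
  (q - q⁻¹) * qnum q (a - b) * qnum q (a - c) * qnum q (b - c)

/-- The trilinear bracket `⟦L_a,L_b,L_c⟧ = g(a,b,c)·L_{a+b+c}` on the free ℂ-module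
`ℤ →₀ ℂ` with basis `L_i = single i 1`, extended trilinearly. -/
noncomputable def VWbr (q : ℂ) (f g h : ℤ →₀ ℂ) : ℤ →₀ ℂ :=
  f.sum fun a ca => g.sum fun b cb => h.sum fun c cc =>
    (ca * cb * cc * gVW q a b c) • Finsupp.single (a + b + c) (1 : ℂ)

/-!
In the variables `uᵢ = q ^ (2 xᵢ)`, the q-number `[xᵢ - xⱼ]` is a constant times
`(uᵢ - uⱼ) / q ^ (xᵢ + xⱼ)`. Over the symmetric denominator `(u₀ u₁ u₂ u₃ u₄) ^ 2`, each summand of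
the sh-Jacobi sum therefore becomes a polynomial of degree at most `8` in the `uᵢ`, with
coefficients in `ℂ[u₀ u₁ u₂ u₃ u₄]`, which antisymmetrization treats as scalars. Antisymmetrizing a
monomial gives a generalized Vandermonde determinant, which vanishes unless the five exponents are
distinct, and then the degree is at least `0 + 1 + 2 + 3 + 4 = 10`. The identity for the bracket
follows by multilinearity.
-/

open Equiv (Perm)
open Finset MvPolynomial

section Antisymmetrization

variable {ι R : Type*} [Fintype ι] [CommRing R]

theorem choose_two_le_sum_of_injective {m : ι → ℕ} (hm : Function.Injective m) :
    (Fintype.card ι).choose 2 ≤ ∑ i, m i := by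
  have h := Finset.sum_range_le_sum (s := univ.map ⟨fun i => (m i : ℤ), Nat.cast_injective.comp hm⟩)
    (c := 0) (by simp)
  rw [card_map, card_univ, sum_map] at h
  simp only [zero_add, Function.Embedding.coeFn_mk] at h
  rw [Nat.choose_two_right, ← sum_range_id]
  zify
  exact h

variable [DecidableEq ι]

theorem sum_sign_mul_prod_pow_eq_zero_of_not_injective (u : ι → R) {m : ι → ℕ}
    (hm : ¬ Function.Injective m) :
    ∑ σ : Perm ι, ((Perm.sign σ : ℤ) : R) * ∏ i, u (σ i) ^ m i = 0 := by
  obtain ⟨i, j, hij, hne⟩ := Function.not_injective_iff.mp hm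
  have hdet : (Matrix.of fun i j => u i ^ m j).det = 0 :=
    Matrix.det_zero_of_column_eq hne fun k => by simp only [Matrix.of_apply, hij]
  simpa only [Matrix.det_apply', Matrix.of_apply] using hdet

theorem sum_sign_mul_eval_eq_zero_of_totalDegree_lt {p : MvPolynomial ι R}
    (hp : p.totalDegree < (Fintype.card ι).choose 2) (u : ι → R) :
    ∑ σ : Perm ι, ((Perm.sign σ : ℤ) : R) * eval (u ∘ σ) p = 0 := by
  simp only [eval_eq', mul_sum, Function.comp_apply]
  rw [sum_comm]
  refine sum_eq_zero fun d hd => ?_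
  have hd_not_injective : ¬ Function.Injective d := fun hinj => by
    have hdeg : ∑ i, d i ≤ p.totalDegree := by
      rw [← Finsupp.sum_fintype d (fun _ e => e) fun _ => rfl]
      exact le_totalDegree hd
    exact (choose_two_le_sum_of_injective hinj).not_gt (hdeg.trans_lt hp)
  simp only [mul_left_comm _ (p.coeff d), ← mul_sum,
    sum_sign_mul_prod_pow_eq_zero_of_not_injective u hd_not_injective, mul_zero]

end Antisymmetrization

section JacobiNumerator

variable {R : Type*} [CommRing R]

/-- The numerator of the sh-Jacobi summand in the variables `X i = q ^ (2 x i)`, over the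
denominator `(∏ i, X i) ^ 2`. The symmetric function `∏ i, X i` is replaced by a scalar `e`, which
keeps the degree low. -/
noncomputable def jacobiNumerator (e : R) : MvPolynomial (Fin 5) R :=
  (X 0 - X 1) * (X 0 - X 2) * (X 1 - X 2) * (X 3 - X 4) *
    (C e * (X 0 * X 1 * X 2 - (X 3 + X 4)) + (X 3 * X 4) ^ 2)

theorem totalDegree_jacobiNumerator_le (e : R) : (jacobiNumerator e).totalDegree ≤ 8 := by
  have hX (i : Fin 5) : (X i : MvPolynomial (Fin 5) R).IsHomogeneous 1 := isHomogeneous_X R i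
  have hsub (i j : Fin 5) := (hX i).sub (hX j)
  have hdifferences := ((((hsub 0 1).mul (hsub 0 2)).mul (hsub 1 2)).mul (hsub 3 4)).totalDegree_le
  have hcubic := (((hX 0).mul (hX 1)).mul (hX 2)).totalDegree_le
  have hlinear := ((hX 3).add (hX 4)).totalDegree_le
  have hquartic := (((hX 3).mul (hX 4)).pow 2).totalDegree_le
  have hfactor : (C e * (X 0 * X 1 * X 2 - (X 3 + X 4)) + (X 3 * X 4) ^ 2 :
      MvPolynomial (Fin 5) R).totalDegree ≤ 4 := by
    refine (totalDegree_add _ _).trans (max_le ((totalDegree_mul _ _).trans ?_) hquartic)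
    rw [totalDegree_C, zero_add]
    exact (totalDegree_sub _ _).trans (by omega)
  exact (totalDegree_mul _ _).trans (add_le_add hdifferences hfactor)

theorem sum_sign_mul_eval_jacobiNumerator_eq_zero (e : R) (u : Fin 5 → R) :
    ∑ σ : Perm (Fin 5), ((Perm.sign σ : ℤ) : R) * eval (u ∘ σ) (jacobiNumerator e) = 0 :=
  sum_sign_mul_eval_eq_zero_of_totalDegree_lt
    ((totalDegree_jacobiNumerator_le e).trans_lt (by decide)) u

end JacobiNumerator

section StructureConstants

variable {q : ℂ}

theorem qnum_sub (hq : q ≠ 0) (a b : ℤ) :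
    qnum q (a - b) = ((q ^ a) ^ 2 - (q ^ b) ^ 2) / (q ^ a * q ^ b) / (q - q⁻¹) := by
  have ha := zpow_ne_zero a hq
  have hb := zpow_ne_zero b hq
  rw [qnum, neg_sub, zpow_sub₀ hq, zpow_sub₀ hq, div_sub_div _ _ hb ha]
  ring

theorem gVW_eq (hq : q ≠ 0) (a b c : ℤ) :
    gVW q a b c = ((q - q⁻¹) ^ 2)⁻¹ *
      (((q ^ a) ^ 2 - (q ^ b) ^ 2) * ((q ^ a) ^ 2 - (q ^ c) ^ 2) * ((q ^ b) ^ 2 - (q ^ c) ^ 2) /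
        (q ^ a * q ^ b * q ^ c) ^ 2) := by
  rw [gVW, qnum_sub hq, qnum_sub hq, qnum_sub hq]
  generalize q - q⁻¹ = d
  field_simp

theorem gVW_mul_gVW_eq (hq : q ≠ 0) (x : Fin 5 → ℤ) :
    gVW q (x 0) (x 1) (x 2) * gVW q (x 0 + x 1 + x 2) (x 3) (x 4) =
      (((q - q⁻¹) ^ 2)⁻¹ / ∏ i, (q ^ x i) ^ 2) ^ 2 *
        eval (fun i => (q ^ x i) ^ 2) (jacobiNumerator (∏ i, (q ^ x i) ^ 2)) := by
  have hne (i : Fin 5) : q ^ x i ≠ 0 := zpow_ne_zero (x i) hq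
  rw [gVW_eq hq, gVW_eq hq, zpow_add₀ hq, zpow_add₀ hq]
  generalize ((q - q⁻¹) ^ 2)⁻¹ = k
  simp only [jacobiNumerator, Fin.prod_univ_five, map_mul, map_add, map_sub, map_pow, eval_X,
    eval_C]
  field_simp [hne]
  ring

theorem sum_sign_mul_gVW_mul_gVW_eq_zero (hq : q ≠ 0) (x : Fin 5 → ℤ) :
    ∑ σ : Perm (Fin 5), ((Perm.sign σ : ℤ) : ℂ) *
      (gVW q (x (σ 0)) (x (σ 1)) (x (σ 2)) *
        gVW q (x (σ 0) + x (σ 1) + x (σ 2)) (x (σ 3)) (x (σ 4))) = 0 := by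
  set u : Fin 5 → ℂ := fun i => (q ^ x i) ^ 2
  set k : ℂ := (((q - q⁻¹) ^ 2)⁻¹ / ∏ i, u i) ^ 2
  have hterm (σ : Perm (Fin 5)) :
      gVW q (x (σ 0)) (x (σ 1)) (x (σ 2)) *
        gVW q (x (σ 0) + x (σ 1) + x (σ 2)) (x (σ 3)) (x (σ 4)) =
      k * eval (u ∘ σ) (jacobiNumerator (∏ i, u i)) := by
    have h := gVW_mul_gVW_eq hq (x ∘ σ)
    simp only [Function.comp_apply] at h
    rwa [Equiv.prod_comp σ u] at h
  simp only [hterm, mul_left_comm _ k, ← mul_sum, sum_sign_mul_eval_jacobiNumerator_eq_zero,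
    mul_zero]

end StructureConstants

section NestedBracket

variable {R M : Type*} [CommSemiring R] [AddCommGroup M] [Module R M]

/-- The nested bracket `⟦⟦v₀, v₁, v₂⟧, v₃, v₄⟧` of a trilinear bracket `T`, as a multilinear map.
Its alternatization is the left-hand side of the sh-Jacobi identity. -/
def nestedBracket (T : M →ₗ[R] M →ₗ[R] M →ₗ[R] M) : MultilinearMap R (fun _ : Fin 5 => M) M :=
  MultilinearMap.mk' (fun v => T (T (v 0) (v 1) (v 2)) (v 3) (v 4))
    (by intro v i x y; fin_cases i <;> simp [Function.update])
    (by intro v i c x; fin_cases i <;> simp [Function.update])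

theorem alternatization_nestedBracket_apply (T : M →ₗ[R] M →ₗ[R] M →ₗ[R] M) (v : Fin 5 → M) :
    (nestedBracket T).alternatization v = ∑ σ : Perm (Fin 5), (Perm.sign σ : ℤ) •
      T (T (v (σ 0)) (v (σ 1)) (v (σ 2))) (v (σ 3)) (v (σ 4)) :=
  MultilinearMap.alternatization_apply _ v

end NestedBracket

section Bracket

variable (q : ℂ)

/-- The bracket `VWbr q` as a trilinear map, determined by its values on the basis `L_i`. -/
noncomputable def VWbrTrilinear :
    (ℤ →₀ ℂ) →ₗ[ℂ] (ℤ →₀ ℂ) →ₗ[ℂ] (ℤ →₀ ℂ) →ₗ[ℂ] (ℤ →₀ ℂ) :=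
  Finsupp.linearCombination ℂ fun a => Finsupp.linearCombination ℂ fun b =>
    Finsupp.linearCombination ℂ fun c => gVW q a b c • Finsupp.single (a + b + c) (1 : ℂ)

theorem VWbrTrilinear_apply (f g h : ℤ →₀ ℂ) : VWbrTrilinear q f g h = VWbr q f g h := by
  simp only [VWbr, VWbrTrilinear, Finsupp.linearCombination_apply, Finsupp.sum,
    LinearMap.sum_apply, LinearMap.smul_apply, Finset.smul_sum, smul_smul, mul_assoc]

theorem VWbrTrilinear_single (a b c : ℤ) :
    VWbrTrilinear q (Finsupp.single a 1) (Finsupp.single b 1) (Finsupp.single c 1) =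
      gVW q a b c • Finsupp.single (a + b + c) (1 : ℂ) := by
  simp only [VWbrTrilinear, Finsupp.linearCombination_single, one_smul]

theorem VWbrTrilinear_VWbrTrilinear_single (x : Fin 5 → ℤ) :
    VWbrTrilinear q
        (VWbrTrilinear q (Finsupp.single (x 0) 1) (Finsupp.single (x 1) 1)
          (Finsupp.single (x 2) 1))
        (Finsupp.single (x 3) 1) (Finsupp.single (x 4) 1) =
      (gVW q (x 0) (x 1) (x 2) * gVW q (x 0 + x 1 + x 2) (x 3) (x 4)) •
        Finsupp.single (∑ i, x i) (1 : ℂ) := by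
  simp only [VWbrTrilinear_single, map_smul, LinearMap.smul_apply, smul_smul, Fin.sum_univ_five]

variable {q}

theorem alternatization_nestedBracket_VWbrTrilinear_eq_zero (hq : q ≠ 0) :
    (nestedBracket (VWbrTrilinear q)).alternatization = 0 := by
  refine Module.Basis.ext_alternating Finsupp.basisSingleOne fun x _ => ?_
  have hterm (σ : Perm (Fin 5)) := VWbrTrilinear_VWbrTrilinear_single q (x ∘ σ)
  simp only [Function.comp_apply, Equiv.sum_comp _ x] at hterm
  simp only [alternatization_nestedBracket_apply, Finsupp.coe_basisSingleOne, hterm,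
    ← Int.cast_smul_eq_zsmul ℂ, smul_smul, ← sum_smul, sum_sign_mul_gVW_mul_gVW_eq_zero hq,
    zero_smul, AlternatingMap.zero_apply]

end Bracket

/-- the fully antisymmetrized sh-Jacobi sum of the structure constants
vanishes, and consequently the q-deformed Virasoro–Witt 3-algebra satisfies the
sh-Jacobi identity, i.e. it is a sh-3-Lie algebra. -/
theorem stmt4 (q : ℂ) (hq : q ≠ 0) (hq2 : q ^ 2 ≠ 1) :
    (∀ x : Fin 5 → ℤ,
      ∑ σ : Equiv.Perm (Fin 5), ((Equiv.Perm.sign σ : ℤ) : ℂ) *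
        (gVW q (x (σ 0)) (x (σ 1)) (x (σ 2)) *
          gVW q (x (σ 0) + x (σ 1) + x (σ 2)) (x (σ 3)) (x (σ 4))) = 0) ∧
    (∀ v : Fin 5 → (ℤ →₀ ℂ),
      ∑ σ : Equiv.Perm (Fin 5), (Equiv.Perm.sign σ : ℤ) •
        VWbr q (VWbr q (v (σ 0)) (v (σ 1)) (v (σ 2))) (v (σ 3)) (v (σ 4)) = 0) := by
  refine ⟨sum_sign_mul_gVW_mul_gVW_eq_zero hq, fun v => ?_⟩
  simp only [← VWbrTrilinear_apply]
  rw [← alternatization_nestedBracket_apply, alternatization_nestedBracket_VWbrTrilinear_eq_zero hq,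
    AlternatingMap.zero_apply]
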